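/- Let φ ∈ Δ_−. Then [e_φ, θ(e_φ)] ∈ a. Furthermore [e_φ, θ(e_φ)] ≠ 0 if and only if θ(φ) = −φ, in which case [e_φ, θ(e_φ)] is a nonzero multiple of h_φ (and then h_φ ∈ a). In any case, φ + θ(φ) is never a root. -/

import Mathlib

/-!
Write `v = [e_φ, θ e_φ]` and `ψ = φ + θ(φ)`.  Then `θ v = -v`, `v` has `H`-weight `ψ`, and `ψ`
vanishes on `a`, because `θ = -1` there.  So `v` commutes with `a`, and maximality of `a` gives
`v ∈ a ⊆ H`.  Since `H` is nilpotent, a nonzero vector of `H` of weight `ψ` forces `ψ = 0`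
(`weight_eq_zero_of_mem`); hence `v ≠ 0` implies `θ(φ) = -φ`.  Conversely, if `θ(φ) = -φ` then `v`
is a nonzero multiple of `[e_φ, e_{-φ}]`, hence of `h_φ`.

Suppose finally that `ψ` is a root.  Then `ψ ≠ 0`, so `v = 0`, that is `[e_φ, e_{θ(φ)}] = 0`.  By
`sl₂`-theory for the triple of `φ`, the vector `e_{θ(φ)}` is primitive of weight some `n ∈ ℕ`,
while `e_ψ` has weight `n + 2` and `f e_ψ ∈ ℂ e_{θ(φ)}` is killed by `e`.
This is excluded by `IsSl2Triple.eq_zero_of_lie_e_lie_f`: the vectors `e ^ k e_ψ` would all be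
nonzero, giving `ad h` infinitely many eigenvalues.
-/

noncomputable section

/-- In a finite-dimensional representation of an `sl₂` triple, `e ∘ f` is injective on every
eigenspace of `h` for a positive integral eigenvalue. -/
theorem IsSl2Triple.eq_zero_of_lie_e_lie_f {g : Type*} [LieRing g] [LieAlgebra ℂ g]
    [Module.Finite ℂ g] {h e f : g} (t : IsSl2Triple h e f) (n : ℕ) (x : g)
    (hx : ⁅h, x⁆ = ((n : ℂ) + 1) • x) (hefx : ⁅e, ⁅f, x⁆⁆ = 0) : x = 0 := by
  by_contra hx0
  let y : ℕ → g := fun k => (fun z => ⁅e, z⁆)^[k] x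
  have y_zero : y 0 = x := rfl
  have y_succ : ∀ k, y (k + 1) = ⁅e, y k⁆ := fun k => Function.iterate_succ_apply' _ _ _
  have lie_h : ∀ k, ⁅h, y k⁆ = ((n : ℂ) + 1 + 2 * k) • y k := by
    intro k
    induction k with
    | zero => simpa [y_zero] using hx
    | succ k ih =>
      rw [y_succ, leibniz_lie, t.lie_h_e_smul ℂ, ih, smul_lie, lie_smul]
      push_cast
      module
  have lie_f_lie_e : ∀ z : g, ⁅f, ⁅e, z⁆⁆ = ⁅e, ⁅f, z⁆⁆ - ⁅h, z⁆ := by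
    intro z
    rw [leibniz_lie e f z, t.lie_e_f]
    abel
  have lie_f : ∀ k : ℕ, ⁅f, y (k + 1)⁆ = (-(((k : ℂ) + 1) * (n + 1 + k))) • y k := by
    intro k
    induction k with
    | zero =>
      rw [y_succ, lie_f_lie_e, y_zero, hefx, hx]
      push_cast
      module
    | succ k ih =>
      rw [y_succ (k + 1), lie_f_lie_e, ih, lie_h, lie_smul, ← y_succ]
      push_cast
      module
  have y_ne_zero : ∀ k, y k ≠ 0 := by
    intro k
    induction k with
    | zero => exact hx0
    | succ k ih =>
      intro h0
      have hk := lie_f k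
      rw [h0, lie_zero, eq_comm, smul_eq_zero] at hk
      refine hk.elim (fun hc => ?_) ih
      have : ((k + 1) * (n + 1 + k) : ℕ) = 0 := by exact_mod_cast neg_eq_zero.mp hc
      simp at this
  have hfin := Module.End.finite_hasEigenvalue (LieAlgebra.ad ℂ g h)
  refine Set.infinite_of_injective_forall_mem (f := fun k : ℕ => (n : ℂ) + 1 + 2 * k)
    (fun i j hij => by simpa using hij) (fun k => ?_) hfin
  exact Module.End.hasEigenvalue_of_hasEigenvector
    (Module.End.hasEigenvector_iff.mpr ⟨Module.End.mem_eigenspace_iff.mpr (lie_h k), y_ne_zero k⟩)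

/-- A nilpotent subalgebra acts on itself with zero as its only weight. -/
theorem weight_eq_zero_of_mem {g : Type*} [LieRing g] [LieAlgebra ℂ g]
    (H : LieSubalgebra ℂ g) [LieRing.IsNilpotent H] (ψ : Module.Dual ℂ H) (v : g) (hv : v ∈ H)
    (hv0 : v ≠ 0) (hw : ∀ x : H, ⁅(x : g), v⁆ = ψ x • v) : ψ = 0 := by
  obtain ⟨k, hk⟩ := LieModule.exists_forall_pow_toEnd_eq_zero ℂ H H
  ext x
  have pow_apply : ∀ m : ℕ, ((LieModule.toEnd ℂ H H x) ^ m) ⟨v, hv⟩ = (ψ x) ^ m • ⟨v, hv⟩ := by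
    intro m
    induction m with
    | zero => simp
    | succ m ih =>
      have : ⁅x, (⟨v, hv⟩ : H)⁆ = ψ x • ⟨v, hv⟩ := Subtype.ext (hw x)
      rw [pow_succ', Module.End.mul_apply, ih, map_smul, LieModule.toEnd_apply_apply, this,
        smul_smul, pow_succ]
  have h0 := pow_apply k
  rw [hk x, LinearMap.zero_apply, eq_comm, smul_eq_zero] at h0
  refine h0.elim (fun h => eq_zero_of_pow_eq_zero h) (fun h => absurd (congrArg Subtype.val h) hv0)

theorem statement4
    -- `g` is a complex semisimple Lie algebra
    (g : Type) [LieRing g] [LieAlgebra ℂ g] [Module.Finite ℂ g] [LieAlgebra.IsSemisimple ℂ g]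
    -- `θ` is the complexified Cartan involution
    (θ : g →ₗ⁅ℂ⁆ g) (hθ : ∀ x, θ (θ x) = x)
    -- `a` : abelian subalgebra of `p = {x | θ x = -x}`, maximal abelian in `p`
    (a : LieSubalgebra ℂ g)
    (hap : ∀ x ∈ a, θ x = -x)
    (haab : ∀ x ∈ a, ∀ y ∈ a, ⁅x, y⁆ = 0)
    (hamax : ∀ x, θ x = -x → (∀ y ∈ a, ⁅x, y⁆ = 0) → x ∈ a)
    -- `H` : a `θ`-stable Cartan subalgebra of `g` containing `a`
    (H : LieSubalgebra ℂ g) [H.IsCartanSubalgebra] (haH : a ≤ H)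
    (θH : H →ₗ[ℂ] H) (hθH : ∀ x : H, (θH x : g) = θ (x : g))
    -- the roots `Δ` of `(H, g)` and the chosen root vectors `E φ = e_φ`
    (Δ : Set (Module.Dual ℂ H)) (E : Module.Dual ℂ H → g)
    (hE : ∀ φ ∈ Δ, E φ ≠ 0 ∧ ∀ x : H, ⁅(x : g), E φ⁆ = φ x • E φ)
    (hroot1dim : ∀ φ ∈ Δ, ∀ v : g, (∀ x : H, ⁅(x : g), v⁆ = φ x • v) → ∃ c : ℂ, v = c • E φ)
    (hnegroot : ∀ φ ∈ Δ, -φ ∈ Δ)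
    -- the induced involution `θΔ` on roots, with `θ(ℂ e_φ) = ℂ e_{θΔ(φ)}`
    (θΔ : Module.Dual ℂ H → Module.Dual ℂ H)
    (hθΔ : ∀ φ ∈ Δ, θΔ φ ∈ Δ ∧ ∃ c : ℂ, c ≠ 0 ∧ θ (E φ) = c • E (θΔ φ))
    (hθΔfun : ∀ φ ∈ Δ, ∀ x : H, θΔ φ x = φ (θH x))
    -- a positive system `Δpos = Δ_+` (of the Borel subalgebra `b`)
    (Δpos : Set (Module.Dual ℂ H)) (hpossub : Δpos ⊆ Δ)
    (hpos : ∀ φ ∈ Δ, (φ ∈ Δpos ↔ ¬(-φ ∈ Δpos)))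
    -- the coroot elements `hco φ = h_φ` of the TDS generated by `e_φ` and `e_{-φ}`
    (hco : Module.Dual ℂ H → g)
    (hhco : ∀ φ ∈ Δ, hco φ ∈ H ∧ ⁅hco φ, E φ⁆ = (2 : ℂ) • E φ ∧
      ⁅hco φ, E (-φ)⁆ = (-2 : ℂ) • E (-φ) ∧ ∃ c : ℂ, c ≠ 0 ∧ hco φ = c • ⁅E φ, E (-φ)⁆)
    -- let `φ ∈ Δ_-`
    (φ : Module.Dual ℂ H) (hφ : φ ∈ Δ) (hφneg : -φ ∈ Δpos) :
    -- `[e_φ, θ(e_φ)] ∈ a`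
    ⁅E φ, θ (E φ)⁆ ∈ a ∧
    -- `[e_φ, θ(e_φ)] ≠ 0` if and only if `θ(φ) = -φ` ...
    (⁅E φ, θ (E φ)⁆ ≠ 0 ↔ θΔ φ = -φ) ∧
    -- ... in which case `[e_φ, θ(e_φ)]` is a nonzero multiple of `h_φ`, and `h_φ ∈ a`
    (θΔ φ = -φ → (∃ c : ℂ, c ≠ 0 ∧ ⁅E φ, θ (E φ)⁆ = c • hco φ) ∧ hco φ ∈ a) ∧
    -- in any case `φ + θ(φ)` is never a root
    φ + θΔ φ ∉ Δ := by
  obtain ⟨hEφ, hwφ⟩ := hE φ hφ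
  obtain ⟨hθφ, c, hc, hcE⟩ := hθΔ φ hφ
  obtain ⟨hEθ, hwθ⟩ := hE _ hθφ
  obtain ⟨hcoH, hcoE, hcoE', d, hd, hcoeq⟩ := hhco φ hφ
  have hco_ne : hco φ ≠ 0 := by
    intro h0
    rw [h0, zero_lie, eq_comm, smul_eq_zero] at hcoE
    exact hcoE.elim two_ne_zero hEφ
  have zero_notMem : (0 : Module.Dual ℂ H) ∉ Δ := fun h0 => by
    have := hpos 0 h0
    rw [neg_zero] at this
    tauto
  have weight_lie : ∀ (α β : Module.Dual ℂ H) (u w : g), (∀ x : H, ⁅(x : g), u⁆ = α x • u) →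
      (∀ x : H, ⁅(x : g), w⁆ = β x • w) → ∀ x : H, ⁅(x : g), ⁅u, w⁆⁆ = (α + β) x • ⁅u, w⁆ := by
    intro α β u w hu hw x
    rw [leibniz_lie, hu, hw, smul_lie, lie_smul, LinearMap.add_apply, add_smul]
  have hwv : ∀ x : H, ⁅(x : g), ⁅E φ, θ (E φ)⁆⁆ = (φ + θΔ φ) x • ⁅E φ, θ (E φ)⁆ := by
    refine weight_lie _ _ _ _ hwφ (fun x => ?_)
    rw [hcE, lie_smul, hwθ, smul_comm]
  have hva : ⁅E φ, θ (E φ)⁆ ∈ a := by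
    refine hamax _ ?_ (fun y hy => ?_)
    · rw [LieHom.map_lie, hθ, lie_skew]
    · have hψy : (φ + θΔ φ) ⟨y, haH hy⟩ = 0 := by
        have : θH ⟨y, haH hy⟩ = -⟨y, haH hy⟩ := Subtype.ext (by rw [hθH]; exact hap y hy)
        rw [LinearMap.add_apply, hθΔfun φ hφ, this, map_neg, add_neg_cancel]
      have := hwv ⟨y, haH hy⟩
      rw [hψy, zero_smul] at this
      rw [← lie_skew, this, neg_zero]
  have hv_ne : ⁅E φ, θ (E φ)⁆ ≠ 0 → θΔ φ = -φ := fun hv =>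
    (neg_eq_of_add_eq_zero_right
      (weight_eq_zero_of_mem H (φ + θΔ φ) _ (haH hva) hv hwv)).symm
  have hmul : θΔ φ = -φ → ∃ c : ℂ, c ≠ 0 ∧ ⁅E φ, θ (E φ)⁆ = c • hco φ := by
    intro h
    refine ⟨c * d⁻¹, mul_ne_zero hc (inv_ne_zero hd), ?_⟩
    rw [hcE, h, lie_smul, hcoeq, smul_smul, mul_assoc, inv_mul_cancel₀ hd, mul_one]
  refine ⟨hva, ⟨hv_ne, fun h => ?_⟩, fun h => ⟨hmul h, ?_⟩, fun hψ => ?_⟩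
  · obtain ⟨k, hk, hv⟩ := hmul h
    rw [hv]
    exact smul_ne_zero hk hco_ne
  · obtain ⟨k, hk, hv⟩ := hmul h
    have : hco φ = k⁻¹ • ⁅E φ, θ (E φ)⁆ := by rw [hv, smul_smul, inv_mul_cancel₀ hk, one_smul]
    rw [this]
    exact a.smul_mem _ hva
  · obtain ⟨hEψ, hwψ⟩ := hE _ hψ
    have hcomm : ⁅E φ, E (θΔ φ)⁆ = 0 := by
      by_contra hne
      have hv : ⁅E φ, θ (E φ)⁆ ≠ 0 := by
        rw [hcE, lie_smul]
        exact smul_ne_zero hc hne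
      rw [hv_ne hv, add_neg_cancel] at hψ
      exact zero_notMem hψ
    -- `E (-φ)` must be rescaled by `d` to complete an `sl₂` triple.
    have t : IsSl2Triple (hco φ) (E φ) (d • E (-φ)) :=
      { h_ne_zero := hco_ne
        lie_e_f := by rw [lie_smul, hcoeq]
        lie_h_e_nsmul := by rw [hcoE]; module
        lie_h_f_nsmul := by rw [lie_smul, hcoE']; module }
    have P : t.HasPrimitiveVectorWith (E (θΔ φ)) (θΔ φ ⟨hco φ, hcoH⟩) :=
      ⟨hEθ, hwθ ⟨hco φ, hcoH⟩, hcomm⟩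
    obtain ⟨n, hn⟩ := P.exists_nat
    have hφ2 : φ ⟨hco φ, hcoH⟩ = 2 :=
      smul_left_injective ℂ hEφ ((hwφ ⟨hco φ, hcoH⟩).symm.trans hcoE)
    refine hEψ (t.eq_zero_of_lie_e_lie_f (n + 1) _ ?_ ?_)
    · have := hwψ ⟨hco φ, hcoH⟩
      rw [LinearMap.add_apply, hφ2, hn] at this
      refine this.trans ?_
      push_cast
      module
    · obtain ⟨k, hk⟩ := hroot1dim _ hθφ ⁅E (-φ), E (φ + θΔ φ)⁆ (fun x => by
        have := weight_lie _ _ _ _ (hE _ (hnegroot φ hφ)).2 hwψ x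
        rwa [neg_add_cancel_left] at this)
      rw [smul_lie, hk, lie_smul, lie_smul, hcomm, smul_zero, smul_zero]
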